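/- Let 0 < λ < μ₁ with λD < 1 and set α₁ = μ₁ − λ. Then the probability p(B) that a packet is queued only at the first system of the M/M/1–M/D/1 tandem satisfies (λ/μ₁) · [ (1 − λD) e^{−μ₁D} + ∫₀^∞ e^{−μ₁(w+D)} f_W(w) dw ] = (1 − λD)(λ/μ₁) e^{−μ₁D} ( 1 + λ(e^{μ₁D} − 1)/(α₁ e^{μ₁D} + λ) ). -/

import Mathlib

open Real MeasureTheory Filter

/-- Stationary waiting-time CDF of the M/D/1 queue (Erlang's formula),
extended by `0` on the negative reals. -/
noncomputable def PW (lam D w : ℝ) : ℝ :=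
  if w < 0 then 0 else
    (1 - lam * D) * ∑ k ∈ Finset.range (⌊w / D⌋₊ + 1),
      (-(lam * (w - (k : ℝ) * D))) ^ k * Real.exp (lam * (w - (k : ℝ) * D)) /
        (Nat.factorial k)

/-- Continuous part of the stationary waiting-time density of the M/D/1 queue. -/
noncomputable def fW (lam D w : ℝ) : ℝ :=
  (1 - lam * D) * (lam * Real.exp (lam * w) +
    ∑ k ∈ Finset.Icc 1 ⌊w / D⌋₊,
      (-lam) ^ k * (w - (k : ℝ) * D) ^ (k - 1) * Real.exp (lam * (w - (k : ℝ) * D)) *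
        ((k : ℝ) + lam * (w - (k : ℝ) * D)) / (Nat.factorial k))

/-- The density, reindexed from `0`. -/
lemma fW_eq_sum_range (lam D w : ℝ) :
    fW lam D w = (1 - lam * D) * (lam * Real.exp (lam * w) +
      ∑ k ∈ Finset.range ⌊w / D⌋₊,
        (lam * ((-(lam * (w - ((k + 1 : ℕ) : ℝ) * D))) ^ (k + 1) *
            Real.exp (lam * (w - ((k + 1 : ℕ) : ℝ) * D)) / (Nat.factorial (k + 1))) -
          lam * ((-(lam * (w - ((k + 1 : ℕ) : ℝ) * D))) ^ k *
            Real.exp (lam * (w - ((k + 1 : ℕ) : ℝ) * D)) / (Nat.factorial k)))) := by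
  unfold fW
  congr 2
  rw [← Finset.Ico_add_one_right_eq_Icc, Finset.sum_Ico_eq_sum_range]
  refine Finset.sum_congr (by simp) fun k _ => ?_
  rw [add_comm 1 k, Nat.add_sub_cancel, Nat.factorial_succ]
  generalize w - ((k + 1 : ℕ) : ℝ) * D = u
  rw [neg_mul_eq_neg_mul, mul_pow, mul_pow]
  have hk : (Nat.factorial k : ℝ) ≠ 0 := by positivity
  have hk' : (k : ℝ) + 1 ≠ 0 := by positivity
  push_cast
  field_simp
  ring

lemma PW_of_neg (lam D : ℝ) {w : ℝ} (hw : w < 0) : PW lam D w = 0 := by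
  simp [PW, hw]

/-- On the first service interval the waiting-time CDF is an exponential. -/
lemma PW_of_lt (lam : ℝ) {D w : ℝ} (hD : 0 < D) (hw : 0 ≤ w) (hwD : w < D) :
    PW lam D w = (1 - lam * D) * Real.exp (lam * w) := by
  have : ⌊w / D⌋₊ = 0 := Nat.floor_eq_zero.2 ((div_lt_one hD).2 hwD)
  simp [PW, hw.not_gt, this]

/-- The density is a difference of values of the CDF. -/
lemma fW_eq_sub (lam : ℝ) {D w : ℝ} (hD : 0 < D) (hw : 0 ≤ w) :
    fW lam D w = lam * (PW lam D w - PW lam D (w - D)) := by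
  rcases lt_or_ge w D with h | h
  · have : ⌊w / D⌋₊ = 0 := Nat.floor_eq_zero.2 ((div_lt_one hD).2 h)
    rw [PW_of_lt lam hD hw h, PW_of_neg _ _ (sub_neg.2 h), fW_eq_sum_range, this]
    simp
    ring
  · have hfl : ⌊(w - D) / D⌋₊ + 1 = ⌊w / D⌋₊ := by
      have h1 : (w - D) / D = w / D - 1 := by field_simp
      have h2 : 1 ≤ ⌊w / D⌋₊ := Nat.le_floor (by rw [Nat.cast_one, one_le_div hD]; exact h)
      rw [h1, Nat.floor_sub_one]
      omega
    rw [fW_eq_sum_range, PW, PW, if_neg hw.not_gt, if_neg (by linarith), hfl,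
      Finset.sum_range_succ', Finset.sum_sub_distrib, ← Finset.mul_sum, ← Finset.mul_sum]
    have hs : ∀ k : ℕ, w - D - (k : ℝ) * D = w - ((k + 1 : ℕ) : ℝ) * D := fun k => by
      push_cast; ring
    simp only [hs]
    simp
    ring

/-- On bounded intervals the CDF is a fixed finite sum of continuous functions. -/
lemma PW_eq_sum_max (lam : ℝ) {D w : ℝ} (hD : 0 < D) (hw : 0 ≤ w) {N : ℕ} (hN : w < N * D) :
    PW lam D w = (1 - lam * D) * ∑ k ∈ Finset.range N,
      (-(lam * max (w - (k : ℝ) * D) 0)) ^ k * Real.exp (lam * (w - (k : ℝ) * D)) /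
        (Nat.factorial k) := by
  rw [PW, if_neg hw.not_gt]
  congr 1
  have hfN : ⌊w / D⌋₊ + 1 ≤ N := by
    rw [Nat.add_one_le_iff, Nat.floor_lt (by positivity), div_lt_iff₀ hD]
    exact hN
  rw [← Finset.sum_subset (Finset.range_mono hfN)]
  · refine Finset.sum_congr rfl fun k hk => ?_
    have hk' : (k : ℝ) ≤ w / D :=
      (Nat.le_floor_iff (by positivity)).1 (Nat.lt_succ_iff.1 (Finset.mem_range.1 hk))
    rw [le_div_iff₀ hD] at hk'
    rw [max_eq_left (by linarith)]
  · intro k _ hk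
    have hk1 : ⌊w / D⌋₊ < k := by rw [Finset.mem_range] at hk; omega
    have hk' : w < k * D := by
      rwa [Nat.floor_lt (by positivity), div_lt_iff₀ hD] at hk1
    have h0 : k ≠ 0 := by omega
    rw [max_eq_right (by linarith)]
    simp [h0]

lemma continuousOn_PW (lam : ℝ) {D : ℝ} (hD : 0 < D) :
    ContinuousOn (PW lam D) (Set.Ici 0) := by
  intro w hw
  rw [Set.mem_Ici] at hw
  obtain ⟨N, hN⟩ := exists_nat_gt (w / D)
  rw [div_lt_iff₀ hD] at hN
  have hc : Continuous fun w : ℝ => (1 - lam * D) * ∑ k ∈ Finset.range N,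
      (-(lam * max (w - (k : ℝ) * D) 0)) ^ k * Real.exp (lam * (w - (k : ℝ) * D)) /
        (Nat.factorial k) := by fun_prop
  refine hc.continuousWithinAt.congr_of_eventuallyEq ?_ (PW_eq_sum_max lam hD hw hN)
  filter_upwards [self_mem_nhdsWithin, mem_nhdsWithin_of_mem_nhds (Iio_mem_nhds hN)] with y hy hyN
  exact PW_eq_sum_max lam hD hy hyN

lemma hasDerivWithinAt_PW (lam : ℝ) {D w : ℝ} (hD : 0 < D) (hw : 0 ≤ w) :
    HasDerivWithinAt (PW lam D) (fW lam D w) (Set.Ici w) w := by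
  have hterm : ∀ k : ℕ, HasDerivAt
      (fun y : ℝ => (-(lam * (y - (k : ℝ) * D))) ^ k * Real.exp (lam * (y - (k : ℝ) * D)) /
        (Nat.factorial k))
      (((k : ℝ) * (-(lam * (w - (k : ℝ) * D))) ^ (k - 1) * (-(lam * 1)) *
          Real.exp (lam * (w - (k : ℝ) * D)) +
        (-(lam * (w - (k : ℝ) * D))) ^ k * (Real.exp (lam * (w - (k : ℝ) * D)) * (lam * 1))) /
        (Nat.factorial k)) w := fun k => by
    have h1 : HasDerivAt (fun y : ℝ => lam * (y - (k : ℝ) * D)) (lam * 1) w :=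
      ((hasDerivAt_id w).sub_const _).const_mul lam
    exact ((h1.neg.pow k).mul h1.exp).div_const _
  have hsum := ((HasDerivAt.fun_sum (u := Finset.range (⌊w / D⌋₊ + 1))
    fun k _ => hterm k).const_mul (1 - lam * D)).hasDerivWithinAt (s := Set.Ici w)
  have hlt : w < (⌊w / D⌋₊ + 1) * D := (div_lt_iff₀ hD).1 (Nat.lt_floor_add_one _)
  refine (hsum.congr_of_eventuallyEq ?_ (by rw [PW, if_neg hw.not_gt])).congr_deriv ?_
  · filter_upwards [self_mem_nhdsWithin, mem_nhdsWithin_of_mem_nhds (Iio_mem_nhds hlt)]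
      with y hy hy'
    have hy0 : 0 ≤ y := hw.trans hy
    have : ⌊y / D⌋₊ = ⌊w / D⌋₊ := by
      rw [Nat.floor_eq_iff (by positivity)]
      refine ⟨(Nat.floor_le (by positivity)).trans ?_, (div_lt_iff₀ hD).2 hy'⟩
      exact div_le_div_of_nonneg_right hy hD.le
    rw [PW, if_neg hy0.not_gt, this]
  · rw [fW_eq_sum_range, Finset.sum_range_succ', add_comm (lam * _)]
    congr 2
    · refine Finset.sum_congr rfl fun k _ => ?_
      rw [Nat.add_sub_cancel, Nat.factorial_succ]
      have hk : (Nat.factorial k : ℝ) ≠ 0 := by positivity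
      have hk' : (k : ℝ) + 1 ≠ 0 := by positivity
      push_cast
      field_simp
      ring
    · simp [mul_comm]

lemma PW_eq_indicator (lam D : ℝ) :
    PW lam D = (Set.Ici 0).indicator fun w => PW lam D (max w 0) := by
  ext w
  by_cases hw : 0 ≤ w
  · simp [hw]
  · simp [hw, PW_of_neg lam D (not_le.1 hw)]

lemma continuous_PW_max (lam : ℝ) {D : ℝ} (hD : 0 < D) :
    Continuous fun w => PW lam D (max w 0) :=
  (continuousOn_PW lam hD).comp_continuous (by fun_prop) fun w => le_max_right w 0

lemma measurable_PW (lam : ℝ) {D : ℝ} (hD : 0 < D) : Measurable (PW lam D) := by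
  rw [PW_eq_indicator]
  exact (continuous_PW_max lam hD).measurable.indicator measurableSet_Ici

lemma intervalIntegrable_PW (lam : ℝ) {D : ℝ} (hD : 0 < D) (a b : ℝ) :
    IntervalIntegrable (PW lam D) volume a b := by
  rw [PW_eq_indicator, intervalIntegrable_iff]
  exact (intervalIntegrable_iff.1
    ((continuous_PW_max lam hD).intervalIntegrable a b)).indicator measurableSet_Ici

lemma intervalIntegrable_fW (lam : ℝ) {D a b : ℝ} (hD : 0 < D) (ha : 0 ≤ a) (hab : a ≤ b) :
    IntervalIntegrable (fW lam D) volume a b := by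
  have h : IntervalIntegrable (fun w => lam * (PW lam D w - PW lam D (w - D))) volume a b := by
    refine ((intervalIntegrable_PW lam hD a b).sub ?_).const_mul lam
    simpa using (intervalIntegrable_PW lam hD (a - D) (b - D)).comp_sub_right D
  refine h.congr fun w hw => ?_
  rw [Set.uIoc_of_le hab] at hw
  exact (fW_eq_sub lam hD (ha.trans hw.1.le)).symm

lemma integral_fW (lam : ℝ) {D a b : ℝ} (hD : 0 < D) (ha : 0 ≤ a) (hab : a ≤ b) :
    ∫ w in a..b, fW lam D w = PW lam D b - PW lam D a := by
  refine intervalIntegral.integral_eq_sub_of_hasDeriv_right ?_ ?_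
    (intervalIntegrable_fW lam hD ha hab)
  · rw [Set.uIcc_of_le hab]
    exact (continuousOn_PW lam hD).mono fun w hw => ha.trans hw.1
  · intro w hw
    rw [min_eq_left hab] at hw
    exact (hasDerivWithinAt_PW lam hD (ha.trans hw.1.le)).mono Set.Ioi_subset_Ici_self

lemma fW_pos {lam D w : ℝ} (hlam : 0 < lam) (hD : 0 < D) (hstab : lam * D < 1) (hw : 0 ≤ w) :
    0 < fW lam D w := by
  have hsmall : ∀ y, 0 ≤ y → y < D → 0 < fW lam D y := fun y hy hyD => by
    rw [fW_eq_sub lam hD hy, PW_of_lt lam hD hy hyD, PW_of_neg _ _ (sub_neg.2 hyD), sub_zero]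
    have : 0 < 1 - lam * D := sub_pos.2 hstab
    positivity
  by_contra! hneg
  have hcont : ContinuousOn (fun y => PW lam D y - PW lam D (y - D)) (Set.Ici D) := by
    refine ((continuousOn_PW lam hD).mono (Set.Ici_subset_Ici.2 hD.le)).sub ?_
    exact (continuousOn_PW lam hD).comp (by fun_prop) fun y hy =>
      Set.mem_Ici.2 (sub_nonneg.2 (Set.mem_Ici.1 hy))
  set S := Set.Ici D ∩ (fun y => PW lam D y - PW lam D (y - D)) ⁻¹' Set.Iic 0 with hS
  have hSmem : ∀ y, 0 ≤ y → fW lam D y ≤ 0 → y ∈ S := fun y hy hfy => by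
    refine ⟨not_lt.1 fun h => (hsmall y hy h).not_ge hfy, ?_⟩
    rw [fW_eq_sub lam hD hy] at hfy
    exact nonpos_of_mul_nonpos_right hfy hlam
  have hclosed : IsClosed S := hcont.preimage_isClosed_of_isClosed isClosed_Ici isClosed_Iic
  have hbdd : BddBelow S := ⟨D, fun y hy => hy.1⟩
  obtain ⟨hD₀, hle⟩ := hclosed.csInf_mem ⟨w, hSmem w hw hneg⟩ hbdd
  set w₀ := sInf S
  have hD₀ : D ≤ w₀ := hD₀
  have hle : PW lam D w₀ - PW lam D (w₀ - D) ≤ 0 := hle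
  have hpos : 0 < ∫ y in (w₀ - D)..w₀, fW lam D y := by
    refine intervalIntegral.intervalIntegral_pos_of_pos_on
      (intervalIntegrable_fW lam hD (by linarith) (by linarith)) (fun y hy => ?_) (by linarith)
    by_contra! hfy
    exact (csInf_le hbdd (hSmem y (by linarith [hy.1]) hfy)).not_gt hy.2
  rw [integral_fW lam hD (by linarith) (by linarith)] at hpos
  exact hpos.not_ge hle

lemma PW_nonneg {lam D : ℝ} (hlam : 0 < lam) (hD : 0 < D) (hstab : lam * D < 1) (w : ℝ) :
    0 ≤ PW lam D w := by
  rcases lt_or_ge w 0 with hw | hw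
  · exact (PW_of_neg lam D hw).ge
  · have h := integral_fW lam hD le_rfl hw
    have h0 : 0 ≤ ∫ y in (0 : ℝ)..w, fW lam D y :=
      intervalIntegral.integral_nonneg hw fun y hy => (fW_pos hlam hD hstab hy.1).le
    rw [PW_of_lt lam hD le_rfl hD, mul_zero, Real.exp_zero] at h
    linarith

/-- Right derivative of the exponentially discounted CDF. -/
lemma hasDerivWithinAt_exp_mul_PW (lam s : ℝ) {D w : ℝ} (hD : 0 < D) (hw : 0 ≤ w) :
    HasDerivWithinAt (fun y => Real.exp (-s * y) * PW lam D y)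
      (Real.exp (-s * w) * fW lam D w - s * (Real.exp (-s * w) * PW lam D w)) (Set.Ici w) w := by
  have h : HasDerivAt (fun y : ℝ => Real.exp (-s * y)) (Real.exp (-s * w) * (-s * 1)) w :=
    ((hasDerivAt_id w).const_mul (-s)).exp
  refine (h.hasDerivWithinAt.mul (hasDerivWithinAt_PW lam hD hw)).congr_deriv ?_
  ring

lemma continuousOn_exp_mul_PW (lam s : ℝ) {D : ℝ} (hD : 0 < D) :
    ContinuousOn (fun y => Real.exp (-s * y) * PW lam D y) (Set.Ici 0) :=
  ContinuousOn.mul (by fun_prop) (continuousOn_PW lam hD)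

lemma PW_le_exp {lam D w : ℝ} (hlam : 0 < lam) (hD : 0 < D) (hstab : lam * D < 1) (hw : 0 ≤ w) :
    PW lam D w ≤ (1 - lam * D) * Real.exp (lam * w) := by
  have key : Real.exp (-lam * w) * PW lam D w ≤ 1 - lam * D := by
    refine image_le_of_deriv_right_le_deriv_boundary (B := fun _ => 1 - lam * D)
      (B' := fun _ => 0) ((continuousOn_exp_mul_PW lam lam hD).mono Set.Icc_subset_Ici_self)
      (fun y hy => hasDerivWithinAt_exp_mul_PW lam lam hD hy.1) ?_ continuousOn_const
      (fun y _ => hasDerivWithinAt_const _ _ _) (fun y hy => ?_) (Set.right_mem_Icc.2 hw)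
    · simp [PW_of_lt lam hD le_rfl hD]
    · rw [fW_eq_sub lam hD hy.1]
      have := mul_nonneg (mul_nonneg hlam.le (Real.exp_pos (-lam * y)).le)
        (PW_nonneg hlam hD hstab (y - D))
      linarith
  rw [neg_mul, Real.exp_neg, inv_mul_le_iff₀ (Real.exp_pos _)] at key
  linarith

lemma exp_mul_PW_le {lam D s w : ℝ} (hlam : 0 < lam) (hD : 0 < D) (hstab : lam * D < 1)
    (hw : 0 ≤ w) :
    Real.exp (-s * w) * PW lam D w ≤ (1 - lam * D) * Real.exp (-(s - lam) * w) := by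
  have h := mul_le_mul_of_nonneg_left (PW_le_exp hlam hD hstab hw) (Real.exp_pos (-s * w)).le
  have he : Real.exp (-(s - lam) * w) = Real.exp (-s * w) * Real.exp (lam * w) := by
    rw [← Real.exp_add]; ring_nf
  rw [he]
  linarith

lemma integrable_exp_mul_PW {lam D s : ℝ} (hlam : 0 < lam) (hs : lam < s) (hD : 0 < D)
    (hstab : lam * D < 1) : Integrable fun w => Real.exp (-s * w) * PW lam D w := by
  have hg : Integrable ((Set.Ici (0 : ℝ)).indicator
      fun w => (1 - lam * D) * Real.exp (-(s - lam) * w)) := by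
    rw [integrable_indicator_iff measurableSet_Ici, integrableOn_Ici_iff_integrableOn_Ioi]
    exact (exp_neg_integrableOn_Ioi 0 (sub_pos.2 hs)).const_mul _
  refine hg.mono' ?_ (ae_of_all _ fun w => ?_)
  · have := measurable_PW lam hD
    exact Measurable.aestronglyMeasurable (by fun_prop)
  · rcases lt_or_ge w 0 with hw | hw
    · simp [PW_of_neg lam D hw, hw.not_ge]
    · rw [Set.indicator_of_mem (Set.mem_Ici.2 hw), Real.norm_of_nonneg
        (mul_nonneg (Real.exp_pos _).le (PW_nonneg hlam hD hstab w))]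
      exact exp_mul_PW_le hlam hD hstab hw

lemma tendsto_exp_mul_PW {lam D s : ℝ} (hlam : 0 < lam) (hs : lam < s) (hD : 0 < D)
    (hstab : lam * D < 1) :
    Tendsto (fun w => Real.exp (-s * w) * PW lam D w) atTop (nhds 0) := by
  have hb : Tendsto (fun w => (1 - lam * D) * Real.exp (-(s - lam) * w)) atTop (nhds 0) := by
    have h : Tendsto (fun w : ℝ => -(s - lam) * w) atTop atBot :=
      tendsto_id.const_mul_atTop_of_neg (by linarith)
    simpa using (Real.tendsto_exp_atBot.comp h).const_mul (1 - lam * D)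
  refine squeeze_zero' (Eventually.of_forall fun w =>
    mul_nonneg (Real.exp_pos _).le (PW_nonneg hlam hD hstab w)) ?_ hb
  filter_upwards [eventually_ge_atTop 0] with w hw using exp_mul_PW_le hlam hD hstab hw

/-- The Laplace transform of the shifted CDF. -/
lemma integral_exp_mul_PW_sub (lam s : ℝ) {D : ℝ} (hD : 0 < D) :
    ∫ w in Set.Ioi (0 : ℝ), Real.exp (-s * w) * PW lam D (w - D) =
      Real.exp (-s * D) * ∫ w in Set.Ioi (0 : ℝ), Real.exp (-s * w) * PW lam D w := by
  rw [setIntegral_eq_integral_of_forall_compl_eq_zero, ← integral_Ici_eq_integral_Ioi,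
    setIntegral_eq_integral_of_forall_compl_eq_zero, ← integral_const_mul,
    ← integral_add_right_eq_self _ D]
  · congr 1 with w
    rw [add_sub_cancel_right, mul_add, Real.exp_add]
    ring
  · intro w hw
    rw [PW_of_neg lam D (not_le.1 hw), mul_zero]
  · intro w hw
    have : w ≤ 0 := not_lt.1 hw
    rw [PW_of_neg lam D (by linarith), mul_zero]

lemma integrable_exp_mul_PW_sub {lam D s : ℝ} (hlam : 0 < lam) (hs : lam < s) (hD : 0 < D)
    (hstab : lam * D < 1) : Integrable fun w => Real.exp (-s * w) * PW lam D (w - D) := by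
  refine (((integrable_exp_mul_PW hlam hs hD hstab).comp_sub_right D).const_mul
    (Real.exp (-s * D))).congr (ae_of_all _ fun w => ?_)
  dsimp only
  rw [← mul_assoc, ← Real.exp_add]
  ring_nf

lemma exp_mul_fW_eqOn (lam s : ℝ) {D : ℝ} (hD : 0 < D) :
    Set.EqOn (fun w => lam * (Real.exp (-s * w) * PW lam D w -
      Real.exp (-s * w) * PW lam D (w - D))) (fun w => Real.exp (-s * w) * fW lam D w)
      (Set.Ioi 0) := fun w hw => by
  dsimp only
  rw [fW_eq_sub lam hD (le_of_lt hw)]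
  ring

lemma integrableOn_exp_mul_fW {lam D s : ℝ} (hlam : 0 < lam) (hs : lam < s) (hD : 0 < D)
    (hstab : lam * D < 1) :
    IntegrableOn (fun w => Real.exp (-s * w) * fW lam D w) (Set.Ioi 0) :=
  (((integrable_exp_mul_PW hlam hs hD hstab).sub
    (integrable_exp_mul_PW_sub hlam hs hD hstab)).const_mul lam).integrableOn.congr_fun
    (exp_mul_fW_eqOn lam s hD) measurableSet_Ioi

/-- The delay equation for the CDF on the Laplace side. -/
lemma integral_exp_mul_fW_eq_delay {lam D s : ℝ} (hlam : 0 < lam) (hs : lam < s) (hD : 0 < D)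
    (hstab : lam * D < 1) :
    ∫ w in Set.Ioi (0 : ℝ), Real.exp (-s * w) * fW lam D w =
      lam * (1 - Real.exp (-s * D)) *
        ∫ w in Set.Ioi (0 : ℝ), Real.exp (-s * w) * PW lam D w := by
  rw [← setIntegral_congr_fun measurableSet_Ioi (exp_mul_fW_eqOn lam s hD), integral_const_mul,
    integral_sub (integrable_exp_mul_PW hlam hs hD hstab).integrableOn
      (integrable_exp_mul_PW_sub hlam hs hD hstab).integrableOn,
    integral_exp_mul_PW_sub lam s hD]
  ring

/-- Integration by parts: the density transform in terms of the CDF transform. -/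
lemma integral_exp_mul_fW_eq_sub {lam D s : ℝ} (hlam : 0 < lam) (hs : lam < s) (hD : 0 < D)
    (hstab : lam * D < 1) :
    ∫ w in Set.Ioi (0 : ℝ), Real.exp (-s * w) * fW lam D w =
      s * (∫ w in Set.Ioi (0 : ℝ), Real.exp (-s * w) * PW lam D w) - (1 - lam * D) := by
  have hP := ((integrable_exp_mul_PW hlam hs hD hstab).const_mul s).integrableOn (s := Set.Ioi 0)
  have hf := integrableOn_exp_mul_fW hlam hs hD hstab
  have hlim := intervalIntegral_tendsto_integral_Ioi 0 (hf.sub hP) tendsto_id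
  have hlim' := (tendsto_exp_mul_PW hlam hs hD hstab).sub_const (1 - lam * D)
  have heq := tendsto_nhds_unique_of_eventuallyEq hlim hlim' (by
    filter_upwards [eventually_ge_atTop 0] with T hT
    have hFTC := intervalIntegral.integral_eq_sub_of_hasDeriv_right
      (f := fun y => Real.exp (-s * y) * PW lam D y) (a := 0) (b := T)
      ((continuousOn_exp_mul_PW lam s hD).mono
        (by rw [Set.uIcc_of_le hT]; exact Set.Icc_subset_Ici_self))
      (fun w hw => (hasDerivWithinAt_exp_mul_PW lam s hD
        (by rw [min_eq_left hT] at hw; exact hw.1.le)).mono Set.Ioi_subset_Ici_self)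
      ((intervalIntegrable_iff_integrableOn_Ioc_of_le hT).2
        ((hf.sub hP).mono_set Set.Ioc_subset_Ioi_self))
    simpa [PW_of_lt lam hD le_rfl hD] using hFTC)
  simp only [Pi.sub_apply] at heq
  rw [integral_sub hf hP, integral_const_mul] at heq
  linarith

/-- The Laplace transform of the continuous part of the waiting-time density. -/
lemma integral_exp_mul_fW {lam D s : ℝ} (hlam : 0 < lam) (hs : lam < s) (hD : 0 < D)
    (hstab : lam * D < 1) :
    ∫ w in Set.Ioi (0 : ℝ), Real.exp (-s * w) * fW lam D w =
      (1 - lam * D) * (lam * (Real.exp (s * D) - 1) / ((s - lam) * Real.exp (s * D) + lam)) := by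
  have h1 := integral_exp_mul_fW_eq_delay hlam hs hD hstab
  have h2 := integral_exp_mul_fW_eq_sub hlam hs hD hstab
  set L := ∫ w in Set.Ioi (0 : ℝ), Real.exp (-s * w) * fW lam D w
  set P := ∫ w in Set.Ioi (0 : ℝ), Real.exp (-s * w) * PW lam D w
  have hden : 0 < (s - lam) * Real.exp (s * D) + lam := by
    have := sub_pos.2 hs
    positivity
  rw [neg_mul, Real.exp_neg] at h1
  have hE := (Real.exp_pos (s * D)).ne'
  rw [← mul_div_assoc, eq_div_iff hden.ne']
  field_simp at h1
  linear_combination s * h1 - lam * (Real.exp (s * D) - 1) * h2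

/-- probability `p(B)` that a packet of the M/M/1 – M/D/1 tandem is
queued only at the first system. -/
theorem md1_tandem_pB (lam D μ₁ α₁ : ℝ) (hlam : 0 < lam) (hμ₁ : lam < μ₁)
    (hD : 0 < D) (hstab : lam * D < 1) (hα₁ : α₁ = μ₁ - lam) :
    lam / μ₁ * ((1 - lam * D) * Real.exp (-μ₁ * D) +
        ∫ w in Set.Ioi (0:ℝ), Real.exp (-μ₁ * (w + D)) * fW lam D w) =
      (1 - lam * D) * (lam / μ₁) * Real.exp (-μ₁ * D) *
        (1 + lam * (Real.exp (μ₁ * D) - 1) / (α₁ * Real.exp (μ₁ * D) + lam)) := by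
  have hint : ∫ w in Set.Ioi (0:ℝ), Real.exp (-μ₁ * (w + D)) * fW lam D w =
      Real.exp (-μ₁ * D) * ∫ w in Set.Ioi (0:ℝ), Real.exp (-μ₁ * w) * fW lam D w := by
    rw [← integral_const_mul]
    congr 1 with w
    rw [mul_add, Real.exp_add]
    ring
  rw [hint, integral_exp_mul_fW hlam hμ₁ hD hstab, hα₁]
  ring
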